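/- Let φ be an N-function satisfying the δ₂ condition near zero. Then the nonsquare constant of the noncommutative Orlicz sequence space S_φ(H) (with the Luxemburg norm) satisfies J(S_φ) ≥ max{(α_φ)^{−1}, 2β_φ}, where α_φ = liminf_{u→0} φ^{−1}(u)/φ^{−1}(2u) and β_φ = limsup_{u→0} φ^{−1}(u)/φ^{−1}(2u). -/

import Mathlib

open scoped InnerProductSpace ENNReal Topology
open Filter

/-- An Orlicz function (N-function): convex, nondecreasing and continuous on `[0, ∞)`,
vanishing at `0`, positive on `(0, ∞)` and tending to `∞` at `∞`. -/
structure OrliczFunction : Type where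
  toFun : ℝ → ℝ
  convexOn : ConvexOn ℝ (Set.Ici (0 : ℝ)) toFun
  monotoneOn : MonotoneOn toFun (Set.Ici (0 : ℝ))
  continuousOn : ContinuousOn toFun (Set.Ici (0 : ℝ))
  map_zero : toFun 0 = 0
  pos : ∀ x : ℝ, 0 < x → 0 < toFun x
  tendsto_atTop : Filter.Tendsto toFun Filter.atTop Filter.atTop

/-- `ψ` is the complementary N-function of `φ`: `ψ(y) = sup {x·y − φ(x) : x ≥ 0}`. -/
def OrliczFunction.IsComplementary (φ ψ : OrliczFunction) : Prop :=
  ∀ y : ℝ, 0 ≤ y → ψ.toFun y = sSup {v : ℝ | ∃ x : ℝ, 0 ≤ x ∧ v = x * y - φ.toFun x}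

/-- `g` is the (two-sided) inverse of `f` on `[0, ∞)`, taking nonnegative values. -/
def IsOrliczInverse (g f : ℝ → ℝ) : Prop :=
  (∀ u : ℝ, 0 ≤ u → 0 ≤ g u) ∧ (∀ u : ℝ, 0 ≤ u → f (g u) = u) ∧
    ∀ u : ℝ, 0 ≤ u → g (f u) = u

variable {H : Type} [NormedAddCommGroup H] [InnerProductSpace ℂ H] [CompleteSpace H]

/-- The `n`-th singular value of an operator `T` (indexed from `n = 0`), described as the
`n`-th approximation number: the distance from `T` to the operators of rank `≤ n`.  For a
compact operator on a Hilbert space this is exactly the `(n+1)`-st eigenvalue of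
`|T| = (T*T)^(1/2)` in decreasing order. -/
noncomputable def sValue (T : H →L[ℂ] H) (n : ℕ) : ℝ :=
  sInf {c : ℝ | ∃ F : H →L[ℂ] H,
    Module.rank ℂ (LinearMap.range F.toLinearMap) ≤ (n : Cardinal) ∧ c = ‖T - F‖}

/-- `tr(φ(|T|)) = Σ_n φ(s_n(T))`. -/
noncomputable def orliczSum (φ : OrliczFunction) (T : H →L[ℂ] H) : ℝ :=
  ∑' n : ℕ, φ.toFun (sValue T n)

/-- Membership in the noncommutative Orlicz sequence space `S_φ(H)`:
`T` is compact and `Σ_n φ(λ s_n(T)) < ∞` for some `λ > 0`. -/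
def MemS (φ : OrliczFunction) (T : H →L[ℂ] H) : Prop :=
  IsCompactOperator (⇑T) ∧
    ∃ l : ℝ, 0 < l ∧ Summable fun n : ℕ => φ.toFun (l * sValue T n)

/-- The Luxemburg norm `‖T‖_(φ) = inf {λ > 0 : Σ_n φ(s_n(T)/λ) ≤ 1}`. -/
noncomputable def luxNorm (φ : OrliczFunction) (T : H →L[ℂ] H) : ℝ :=
  sInf {l : ℝ | 0 < l ∧ (Summable fun n : ℕ => φ.toFun (sValue T n / l)) ∧
    ∑' n : ℕ, φ.toFun (sValue T n / l) ≤ 1}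

/-- The Orlicz norm `‖T‖_φ = sup {tr |TB| : tr(ψ(B)) ≤ 1}`, expressed through the
complementary function `ψ` of `φ` (here `tr|TB| = Σ_n s_n(TB)`). -/
noncomputable def orlNormVia (ψ : OrliczFunction) (T : H →L[ℂ] H) : ℝ :=
  sSup {c : ℝ | ∃ B : H →L[ℂ] H, IsCompactOperator (⇑B) ∧
    (Summable fun n : ℕ => ψ.toFun (sValue B n)) ∧
    (∑' n : ℕ, ψ.toFun (sValue B n)) ≤ 1 ∧ c = ∑' n : ℕ, sValue (T ∘L B) n}

/-- The norm `‖T‖_((φ),p) = (‖T₁‖_(φ₁)^p + ‖T₂‖_(φ₂)^p)^(1/p)` on 2-tuples. -/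
noncomputable def luxNorm2 (φ₁ φ₂ : OrliczFunction) (p : ℝ) (T₁ T₂ : H →L[ℂ] H) : ℝ :=
  (luxNorm φ₁ T₁ ^ p + luxNorm φ₂ T₂ ^ p) ^ (1 / p)

/-- The Orlicz-type norm `‖T‖_(φ,p) = (‖T₁‖_φ₁^p + ‖T₂‖_φ₂^p)^(1/p)` on 2-tuples,
where the Orlicz norms are computed via the complementary functions `ψ₁, ψ₂`. -/
noncomputable def orlNorm2 (ψ₁ ψ₂ : OrliczFunction) (p : ℝ) (T₁ T₂ : H →L[ℂ] H) : ℝ :=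
  (orlNormVia ψ₁ T₁ ^ p + orlNormVia ψ₂ T₂ ^ p) ^ (1 / p)

/-- 2-tuple Luxemburg norm for an exponent `r ∈ [1, ∞]`. -/
noncomputable def luxNorm2E (φ₁ φ₂ : OrliczFunction) (r : ℝ≥0∞) (T₁ T₂ : H →L[ℂ] H) : ℝ :=
  if r = ⊤ then max (luxNorm φ₁ T₁) (luxNorm φ₂ T₂)
  else (luxNorm φ₁ T₁ ^ r.toReal + luxNorm φ₂ T₂ ^ r.toReal) ^ (1 / r.toReal)

/-- The trace of an operator, computed along a Hilbert basis. -/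
noncomputable def traceAlong {ι : Type} (b : HilbertBasis ι ℂ H) (T : H →L[ℂ] H) : ℂ :=
  ∑' i : ι, ⟪b i, T (b i)⟫_ℂ

/-- The Schatten `p`-norm `‖T‖_p = (Σ_n s_n(T)^p)^(1/p)`. -/
noncomputable def schattenNorm (p : ℝ) (T : H →L[ℂ] H) : ℝ :=
  (∑' n : ℕ, sValue T n ^ p) ^ (1 / p)

/-- Membership in the Schatten class `S_p(H)`. -/
def MemSp (p : ℝ) (T : H →L[ℂ] H) : Prop :=
  IsCompactOperator (⇑T) ∧ Summable fun n : ℕ => sValue T n ^ p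

/-- The nonsquare constant `J` of the noncommutative Orlicz space `S_φ(H)`
(with the Luxemburg norm). -/
noncomputable def JOrlicz (φ : OrliczFunction) : ℝ :=
  sSup {c : ℝ | ∃ T B : H →L[ℂ] H, MemS φ T ∧ MemS φ B ∧
    luxNorm φ T = 1 ∧ luxNorm φ B = 1 ∧
    c = min (luxNorm φ (T + B)) (luxNorm φ (T - B))}

/-- The von Neumann–Jordan constant of `S_φ(H)` (with the Luxemburg norm): the smallest
`c > 0` such that `1/c ≤ (‖x+y‖² + ‖x−y‖²)/(2(‖x‖² + ‖y‖²)) ≤ c` for all `x, y` in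
`S_φ(H)` not both zero. -/
noncomputable def cNJOrlicz (φ : OrliczFunction) : ℝ :=
  sInf {c : ℝ | 0 < c ∧ ∀ T B : H →L[ℂ] H, MemS φ T → MemS φ B → ¬(T = 0 ∧ B = 0) →
    1 / c ≤ (luxNorm φ (T + B) ^ 2 + luxNorm φ (T - B) ^ 2) /
        (2 * (luxNorm φ T ^ 2 + luxNorm φ B ^ 2)) ∧
      (luxNorm φ (T + B) ^ 2 + luxNorm φ (T - B) ^ 2) /
        (2 * (luxNorm φ T ^ 2 + luxNorm φ B ^ 2)) ≤ c}

/-- The von Neumann–Jordan constant of the Schatten class `S_p(H)`. -/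
noncomputable def cNJSchatten (p : ℝ) : ℝ :=
  sInf {c : ℝ | 0 < c ∧ ∀ T B : H →L[ℂ] H, MemSp p T → MemSp p B → ¬(T = 0 ∧ B = 0) →
    1 / c ≤ (schattenNorm p (T + B) ^ 2 + schattenNorm p (T - B) ^ 2) /
        (2 * (schattenNorm p T ^ 2 + schattenNorm p B ^ 2)) ∧
      (schattenNorm p (T + B) ^ 2 + schattenNorm p (T - B) ^ 2) /
        (2 * (schattenNorm p T ^ 2 + schattenNorm p B ^ 2)) ≤ c}

/-!
Along an orthonormal sequence, a diagonal operator with exactly `n` nonzero coefficients, all of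
modulus `a`, has singular values `a` (`n` times) followed by `0`, hence Luxemburg norm
`a / φ⁻¹(1/n)`.  Let `P`, `Q` be the projections onto the spans of two disjoint sets of `n` basis
vectors.  The pair `(aP, aQ)` with `a = φ⁻¹(1/n)` gives `J ≥ φ⁻¹(1/n) / φ⁻¹(1/(2n))`, and the pair
`(a(P + Q), a(P - Q))` with `a = φ⁻¹(1/(2n))` gives `J ≥ 2 φ⁻¹(1/(2n)) / φ⁻¹(1/n)`.  Since `φ⁻¹` is
concave and vanishes at `0`, the values of `φ⁻¹(u)/φ⁻¹(2u)` at `u = 1/(2n)` control all small `u` up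
to a factor `1 - 2u → 1`, so both bounds pass to the limit.
-/

namespace OrliczFunction

variable (φ : OrliczFunction) {x y : ℝ}

theorem mono (hx : 0 ≤ x) (hxy : x ≤ y) : φ.toFun x ≤ φ.toFun y :=
  φ.monotoneOn hx (hx.trans hxy) hxy

theorem nonneg (hx : 0 ≤ x) : 0 ≤ φ.toFun x :=
  φ.map_zero ▸ φ.mono le_rfl hx

theorem map_mul_le {t : ℝ} (ht : 0 ≤ t) (ht1 : t ≤ 1) (hx : 0 ≤ x) :
    φ.toFun (t * x) ≤ t * φ.toFun x := by
  simpa [φ.map_zero] using φ.convexOn.2 (x := x) (y := 0) hx Set.self_mem_Ici ht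
    (sub_nonneg.2 ht1) (add_sub_cancel t 1)

theorem map_add_div_add_le (hx : 0 ≤ x) (hy : 0 ≤ y) {r s : ℝ} (hr : 0 < r) (hs : 0 < s) :
    φ.toFun ((x + y) / (r + s)) ≤
      r / (r + s) * φ.toFun (x / r) + s / (r + s) * φ.toFun (y / s) := by
  have h := φ.convexOn.2 (Set.mem_Ici.2 (div_nonneg hx hr.le)) (Set.mem_Ici.2 (div_nonneg hy hs.le))
    (show 0 ≤ r / (r + s) by positivity) (show 0 ≤ s / (r + s) by positivity) (by field_simp)
  have hxy : r / (r + s) * (x / r) + s / (r + s) * (y / s) = (x + y) / (r + s) := by field_simp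
  simpa only [smul_eq_mul, hxy] using h

end OrliczFunction

namespace IsOrliczInverse

variable {φ : OrliczFunction} {g : ℝ → ℝ}

theorem map_le_iff_le (hg : IsOrliczInverse g φ.toFun) {x u : ℝ} (hx : 0 ≤ x) (hu : 0 ≤ u) :
    φ.toFun x ≤ u ↔ x ≤ g u := by
  constructor
  · intro h
    by_contra! hlt
    have hux : u ≤ φ.toFun x := hg.2.1 u hu ▸ φ.mono (hg.1 u hu) hlt.le
    exact hlt.ne (by rw [← le_antisymm h hux, hg.2.2 x hx])
  · intro h
    exact hg.2.1 u hu ▸ φ.mono hx h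

theorem mono (hg : IsOrliczInverse g φ.toFun) {u w : ℝ} (hu : 0 ≤ u) (huw : u ≤ w) : g u ≤ g w :=
  (hg.map_le_iff_le (hg.1 u hu) (hu.trans huw)).1 ((hg.2.1 u hu).trans_le huw)

theorem pos (hg : IsOrliczInverse g φ.toFun) {u : ℝ} (hu : 0 < u) : 0 < g u := by
  refine (hg.1 u hu.le).lt_of_ne fun h => hu.ne ?_
  rw [← hg.2.1 u hu.le, ← h, φ.map_zero]

theorem mul_le_of_mul_le (hg : IsOrliczInverse g φ.toFun) {t x u : ℝ} (ht : 0 ≤ t)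
    (ht1 : t ≤ 1) (hx : 0 ≤ x) (h : t * x ≤ u) : t * g x ≤ g u := by
  rw [← hg.map_le_iff_le (mul_nonneg ht (hg.1 x hx)) ((mul_nonneg ht hx).trans h)]
  calc φ.toFun (t * g x) ≤ t * φ.toFun (g x) := φ.map_mul_le ht ht1 (hg.1 x hx)
    _ = t * x := by rw [hg.2.1 x hx]
    _ ≤ u := h

theorem mul_ratio_le_ratio_of_ge (hg : IsOrliczInverse g φ.toFun) {t x u : ℝ} (ht : 0 ≤ t)
    (ht1 : t ≤ 1) (hu : 0 < u) (hux : u ≤ x) (h : t * x ≤ u) :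
    t * (g x / g (2 * x)) ≤ g u / g (2 * u) := by
  rw [← mul_div_assoc]
  exact div_le_div₀ (hg.1 u hu.le) (hg.mul_le_of_mul_le ht ht1 (hu.le.trans hux) h)
    (hg.pos (by positivity)) (hg.mono (by positivity) (by gcongr))

theorem mul_ratio_le_ratio_of_le (hg : IsOrliczInverse g φ.toFun) {t x u : ℝ} (ht : 0 ≤ t)
    (ht1 : t ≤ 1) (hu : 0 < u) (hux : u ≤ x) (h : t * x ≤ u) :
    t * (g u / g (2 * u)) ≤ g x / g (2 * x) := by
  have hx : 0 < x := hu.trans_le hux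
  have hden : t * g (2 * x) ≤ g (2 * u) :=
    hg.mul_le_of_mul_le ht ht1 (by positivity) (by linarith)
  rw [← mul_div_assoc, div_le_div_iff₀ (hg.pos (by positivity)) (hg.pos (by positivity))]
  calc t * g u * g (2 * x) = g u * (t * g (2 * x)) := by ring
    _ ≤ g x * g (2 * u) :=
      mul_le_mul (hg.mono hu.le hux) hden (mul_nonneg ht (hg.1 _ (by positivity))) (hg.1 x hx.le)

theorem eventually_ratio_mem_Icc (hg : IsOrliczInverse g φ.toFun) :
    ∀ᶠ u in 𝓝[>] (0 : ℝ), g u / g (2 * u) ∈ Set.Icc 0 1 := by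
  filter_upwards [self_mem_nhdsWithin] with u (hu : 0 < u)
  have h2u : 0 ≤ g (2 * u) := hg.1 _ (by positivity)
  exact ⟨div_nonneg (hg.1 u hu.le) h2u,
    div_le_one_of_le₀ (hg.mono hu.le (le_mul_of_one_le_left hu.le one_le_two)) h2u⟩

end IsOrliczInverse

section Limits

theorem exists_nat_le_one_div_two_mul {u : ℝ} (hu : 0 < u) (hu' : u < 1 / 2) :
    ∃ n : ℕ, 0 < n ∧ u ≤ 1 / (2 * n) ∧ (1 - 2 * u) * (1 / (2 * n)) ≤ u := by
  have h2u : 0 < 2 * u := by positivity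
  have hn : 0 < ⌊1 / (2 * u)⌋₊ := Nat.floor_pos.2 (by rw [le_div_iff₀ h2u]; linarith)
  have h2n : (0 : ℝ) < 2 * ⌊1 / (2 * u)⌋₊ := mul_pos two_pos (Nat.cast_pos.2 hn)
  have hle := (le_div_iff₀ h2u).1 (Nat.floor_le (one_div_pos.2 h2u).le)
  have hlt := (div_lt_iff₀ h2u).1 (Nat.lt_floor_add_one (1 / (2 * u)))
  refine ⟨_, hn, ?_, ?_⟩
  · rw [le_div_iff₀ h2n]
    linarith
  · rw [mul_one_div, div_le_iff₀ h2n]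
    linarith

theorem tendsto_one_sub_two_mul_nhdsGT_zero :
    Tendsto (fun u : ℝ => 1 - 2 * u) (𝓝[>] 0) (𝓝 1) := by
  have h : Continuous fun u : ℝ => 1 - 2 * u := by fun_prop
  simpa using (h.tendsto 0).mono_left nhdsWithin_le_nhds

variable {φ : OrliczFunction} {g : ℝ → ℝ} {C : ℝ}

theorem IsOrliczInverse.le_liminf_ratio (hg : IsOrliczInverse g φ.toFun)
    (hC : ∀ n : ℕ, 0 < n → C ≤ g (1 / (2 * n)) / g (1 / n)) :
    C ≤ liminf (fun u => g u / g (2 * u)) (𝓝[>] 0) := by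
  have hlim : Tendsto (fun u : ℝ => (1 - 2 * u) * C) (𝓝[>] 0) (𝓝 C) := by
    simpa using tendsto_one_sub_two_mul_nhdsGT_zero.mul_const C
  rw [← hlim.liminf_eq]
  refine liminf_le_liminf ?_ hlim.isBoundedUnder_ge (IsBoundedUnder.isCoboundedUnder_ge
    ⟨1, hg.eventually_ratio_mem_Icc.mono fun _ h => h.2⟩)
  filter_upwards [Ioo_mem_nhdsGT one_half_pos] with u hu
  obtain ⟨n, hn, hun, hnu⟩ := exists_nat_le_one_div_two_mul hu.1 hu.2
  have h2n : (2 : ℝ) * (1 / (2 * n)) = 1 / n := by field_simp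
  have ht : 0 ≤ 1 - 2 * u := by linarith [hu.2]
  calc (1 - 2 * u) * C ≤ (1 - 2 * u) * (g (1 / (2 * n)) / g (2 * (1 / (2 * n)))) := by
        rw [h2n]; exact mul_le_mul_of_nonneg_left (hC n hn) ht
    _ ≤ g u / g (2 * u) := hg.mul_ratio_le_ratio_of_ge ht (by linarith [hu.1]) hu.1 hun hnu

theorem IsOrliczInverse.limsup_ratio_le (hg : IsOrliczInverse g φ.toFun)
    (hC : ∀ n : ℕ, 0 < n → g (1 / (2 * n)) / g (1 / n) ≤ C) :
    limsup (fun u => g u / g (2 * u)) (𝓝[>] 0) ≤ C := by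
  have hlim : Tendsto (fun u : ℝ => C / (1 - 2 * u)) (𝓝[>] 0) (𝓝 C) := by
    have h := (tendsto_const_nhds (x := C)).div tendsto_one_sub_two_mul_nhdsGT_zero one_ne_zero
    rwa [div_one] at h
  rw [← hlim.limsup_eq]
  refine limsup_le_limsup ?_ (IsBoundedUnder.isCoboundedUnder_le
    ⟨0, hg.eventually_ratio_mem_Icc.mono fun _ h => h.1⟩) hlim.isBoundedUnder_le
  filter_upwards [Ioo_mem_nhdsGT one_half_pos] with u hu
  obtain ⟨n, hn, hun, hnu⟩ := exists_nat_le_one_div_two_mul hu.1 hu.2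
  have h2n : (2 : ℝ) * (1 / (2 * n)) = 1 / n := by field_simp
  have ht : 0 < 1 - 2 * u := by linarith [hu.2]
  rw [le_div_iff₀' ht]
  calc (1 - 2 * u) * (g u / g (2 * u)) ≤ g (1 / (2 * n)) / g (2 * (1 / (2 * n))) :=
        hg.mul_ratio_le_ratio_of_le ht.le (by linarith [hu.1]) hu.1 hun hnu
    _ ≤ C := by rw [h2n]; exact hC n hn

end Limits

section SingularValues

variable {E : Type} [NormedAddCommGroup E] [InnerProductSpace ℂ E]

theorem sValue_le {T F : E →L[ℂ] E} {n : ℕ}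
    (hF : Module.rank ℂ (LinearMap.range F.toLinearMap) ≤ n) : sValue T n ≤ ‖T - F‖ :=
  csInf_le ⟨0, by rintro _ ⟨G, -, rfl⟩; exact norm_nonneg _⟩ ⟨F, hF, rfl⟩

theorem le_sValue {T : E →L[ℂ] E} {n : ℕ} {a : ℝ}
    (h : ∀ F : E →L[ℂ] E, Module.rank ℂ (LinearMap.range F.toLinearMap) ≤ n → a ≤ ‖T - F‖) :
    a ≤ sValue T n :=
  le_csInf ⟨‖T‖, 0, by simp, by simp⟩ (by rintro _ ⟨F, hF, rfl⟩; exact h F hF)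

theorem sValue_nonneg (T : E →L[ℂ] E) (n : ℕ) : 0 ≤ sValue T n :=
  le_sValue fun _ _ => norm_nonneg _

theorem sValue_le_norm (T : E →L[ℂ] E) (n : ℕ) : sValue T n ≤ ‖T‖ := by
  simpa using sValue_le (T := T) (F := 0) (n := n) (by simp)

theorem sValue_antitone (T : E →L[ℂ] E) : Antitone (sValue T) := fun _ _ h =>
  le_sValue fun _ hF => sValue_le (hF.trans (by exact_mod_cast h))

theorem sValue_add_le (S T : E →L[ℂ] E) (m n : ℕ) :
    sValue (S + T) (m + n) ≤ sValue S m + sValue T n := by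
  rw [← sub_le_iff_le_add]
  refine le_sValue fun F hF => ?_
  rw [sub_le_comm]
  refine le_sValue fun G hG => ?_
  have hFG : Module.rank ℂ (LinearMap.range (F + G).toLinearMap) ≤ ((m + n : ℕ) : Cardinal) := by
    push_cast
    exact (LinearMap.rank_add_le F.toLinearMap G.toLinearMap).trans (add_le_add hF hG)
  rw [sub_le_iff_le_add']
  calc sValue (S + T) (m + n) ≤ ‖S + T - (F + G)‖ := sValue_le hFG
    _ = ‖S - F + (T - G)‖ := by rw [add_sub_add_comm]
    _ ≤ ‖S - F‖ + ‖T - G‖ := norm_add_le _ _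

theorem sValue_eq_zero_of_rank_le {T : E →L[ℂ] E} {n : ℕ}
    (hT : Module.rank ℂ (LinearMap.range T.toLinearMap) ≤ n) : sValue T n = 0 :=
  le_antisymm (by simpa using sValue_le (T := T) hT) (sValue_nonneg T n)

theorem le_sValue_of_lt_finrank {T : E →L[ℂ] E} {K : Submodule ℂ E} {n : ℕ} {a : ℝ}
    (hn : n < Module.finrank ℂ K) (hK : ∀ x ∈ K, a * ‖x‖ ≤ ‖T x‖) : a ≤ sValue T n := by
  refine le_sValue fun F hF => ?_
  have : FiniteDimensional ℂ K := FiniteDimensional.of_finrank_pos (n.zero_le.trans_lt hn)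
  have : FiniteDimensional ℂ (LinearMap.range F.toLinearMap) :=
    Module.rank_lt_aleph0_iff.1 (hF.trans_lt Cardinal.natCast_lt_aleph0)
  obtain ⟨x, hx, hx0⟩ := (Submodule.ne_bot_iff _).1 <|
    (F.toLinearMap.rangeRestrict ∘ₗ K.subtype).ker_ne_bot_of_finrank_lt
      ((Module.finrank_le_of_rank_le hF).trans_lt hn)
  have hFx : F x = 0 := congrArg Subtype.val hx
  refine le_of_mul_le_mul_right ?_ (norm_pos_iff.2 hx0)
  calc a * ‖x‖ ≤ ‖T x‖ := hK x x.2
    _ = ‖(T - F) x‖ := by rw [sub_apply, hFx, sub_zero]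
    _ ≤ ‖T - F‖ * ‖x‖ := (T - F).le_opNorm x

theorem isCompactOperator_of_finiteDimensional_range (T : E →L[ℂ] E)
    [FiniteDimensional ℂ (LinearMap.range T.toLinearMap)] : IsCompactOperator T :=
  have := FiniteDimensional.proper ℂ (LinearMap.range T.toLinearMap)
  (isCompactOperator_of_locallyCompactSpace_dom T.rangeRestrict).clm_comp
    (LinearMap.range T.toLinearMap).subtypeL

theorem memS_of_rank_le (φ : OrliczFunction) {T : E →L[ℂ] E} {n : ℕ}
    (hT : Module.rank ℂ (LinearMap.range T.toLinearMap) ≤ n) : MemS φ T := by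
  have : FiniteDimensional ℂ (LinearMap.range T.toLinearMap) :=
    Module.rank_lt_aleph0_iff.1 (hT.trans_lt Cardinal.natCast_lt_aleph0)
  refine ⟨isCompactOperator_of_finiteDimensional_range T, 1, one_pos,
    summable_of_ne_finset_zero (s := Finset.range n) fun k hk => ?_⟩
  have hnk : (n : Cardinal) ≤ k := by simpa using hk
  rw [sValue_eq_zero_of_rank_le (hT.trans hnk), mul_zero, φ.map_zero]

end SingularValues

section LuxemburgNorm

theorem summable_and_tsum_le_two_mul_of_antitone {f h : ℕ → ℝ} (hf0 : ∀ n, 0 ≤ f n)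
    (hf : Antitone f) (hh : Summable h) (hfh : ∀ k, f (2 * k) ≤ h k) :
    Summable f ∧ ∑' n, f n ≤ 2 * ∑' k, h k := by
  have hodd : ∀ k, f (2 * k + 1) ≤ h k := fun k => (hf (Nat.le_succ _)).trans (hfh k)
  have heven_sum : Summable fun k => f (2 * k) := hh.of_nonneg_of_le (fun _ => hf0 _) hfh
  have hodd_sum : Summable fun k => f (2 * k + 1) := hh.of_nonneg_of_le (fun _ => hf0 _) hodd
  have hsum := heven_sum.hasSum.even_add_odd hodd_sum.hasSum
  refine ⟨hsum.summable, ?_⟩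
  rw [hsum.tsum_eq, two_mul]
  exact add_le_add (heven_sum.tsum_le_tsum hfh hh) (hodd_sum.tsum_le_tsum hodd hh)

variable {E : Type} [NormedAddCommGroup E] [InnerProductSpace ℂ E] {φ : OrliczFunction}

/-- The scales `l > 0` with `Σ_n φ(s_n(T)/l) ≤ 1`, whose infimum is the Luxemburg norm of `T`.
Summability is part of the condition because a divergent `tsum` is `0`. -/
def luxSet (φ : OrliczFunction) (T : E →L[ℂ] E) : Set ℝ :=
  {l | 0 < l ∧ (Summable fun n => φ.toFun (sValue T n / l)) ∧
    ∑' n, φ.toFun (sValue T n / l) ≤ 1}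

theorem luxNorm_eq_sInf_luxSet (φ : OrliczFunction) (T : E →L[ℂ] E) :
    luxNorm φ T = sInf (luxSet φ T) := rfl

theorem luxNorm_le_of_mem {T : E →L[ℂ] E} {l : ℝ} (hl : l ∈ luxSet φ T) : luxNorm φ T ≤ l :=
  csInf_le ⟨0, fun _ h => h.1.le⟩ hl

theorem MemS.luxSet_nonempty {T : E →L[ℂ] E} (hT : MemS φ T) : (luxSet φ T).Nonempty := by
  obtain ⟨-, l, hl, hsum⟩ := hT
  have hterm : ∀ n, 0 ≤ φ.toFun (l * sValue T n) := fun n =>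
    φ.nonneg (mul_nonneg hl.le (sValue_nonneg T n))
  set M := ∑' n, φ.toFun (l * sValue T n)
  have hM : 0 ≤ M := tsum_nonneg hterm
  have hle : ∀ n, φ.toFun (sValue T n / ((M + 1) / l)) ≤
      1 / (M + 1) * φ.toFun (l * sValue T n) := fun n => by
    rw [show sValue T n / ((M + 1) / l) = 1 / (M + 1) * (l * sValue T n) by field_simp]
    exact φ.map_mul_le (by positivity) (div_le_one_of_le₀ (by linarith) (by positivity))
      (mul_nonneg hl.le (sValue_nonneg T n))
  have hsum' := (hsum.mul_left (1 / (M + 1))).of_nonneg_of_le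
    (fun n => φ.nonneg (div_nonneg (sValue_nonneg T n) (by positivity))) hle
  refine ⟨(M + 1) / l, by positivity, hsum', ?_⟩
  calc ∑' n, φ.toFun (sValue T n / ((M + 1) / l)) ≤ 1 / (M + 1) * M :=
        (hsum'.tsum_le_tsum hle (hsum.mul_left _)).trans_eq tsum_mul_left
    _ ≤ 1 := by rw [one_div_mul_eq_div]; exact div_le_one_of_le₀ (by linarith) (by positivity)

-- The factor `2` comes from `s_{2k}(S + T) ≤ s_k(S) + s_k(T)`, which uses each `k` for two indices.
theorem two_mul_add_mem_luxSet {S T : E →L[ℂ] E} {r s : ℝ} (hr : r ∈ luxSet φ S)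
    (hs : s ∈ luxSet φ T) : 2 * (r + s) ∈ luxSet φ (S + T) := by
  obtain ⟨hr0, hSsum, hS1⟩ := hr
  obtain ⟨hs0, hTsum, hT1⟩ := hs
  have hrs : 0 < 2 * (r + s) := by positivity
  set h : ℕ → ℝ := fun k => 1 / 2 * (r / (r + s) * φ.toFun (sValue S k / r) +
    s / (r + s) * φ.toFun (sValue T k / s))
  have hh_hasSum := ((hSsum.hasSum.mul_left (r / (r + s))).add
    (hTsum.hasSum.mul_left (s / (r + s)))).mul_left (1 / 2)
  have hle : ∀ k, φ.toFun (sValue (S + T) (2 * k) / (2 * (r + s))) ≤ h k := fun k => by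
    have hx := sValue_nonneg S k
    have hy := sValue_nonneg T k
    calc φ.toFun (sValue (S + T) (2 * k) / (2 * (r + s)))
        ≤ φ.toFun (1 / 2 * ((sValue S k + sValue T k) / (r + s))) := by
          refine φ.mono (div_nonneg (sValue_nonneg _ _) hrs.le) ?_
          rw [div_mul_div_comm, one_mul, two_mul k]
          exact div_le_div_of_nonneg_right (sValue_add_le S T k k) hrs.le
      _ ≤ 1 / 2 * φ.toFun ((sValue S k + sValue T k) / (r + s)) :=
          φ.map_mul_le one_half_pos.le one_half_lt_one.le (by positivity)
      _ ≤ h k :=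
          mul_le_mul_of_nonneg_left (φ.map_add_div_add_le hx hy hr0 hs0) one_half_pos.le
  obtain ⟨hsum, htsum⟩ := summable_and_tsum_le_two_mul_of_antitone
    (fun n => φ.nonneg (div_nonneg (sValue_nonneg (S + T) n) hrs.le))
    (fun _ n hmn => φ.mono (div_nonneg (sValue_nonneg _ n) hrs.le)
      (div_le_div_of_nonneg_right (sValue_antitone _ hmn) hrs.le)) hh_hasSum.summable hle
  refine ⟨hrs, hsum, htsum.trans ?_⟩
  rw [hh_hasSum.tsum_eq, ← mul_assoc, mul_one_div_cancel two_ne_zero, one_mul]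
  calc _ ≤ r / (r + s) * 1 + s / (r + s) * 1 := by gcongr
    _ = 1 := by field_simp

-- Only some constant is needed here: it bounds the supremum in `JOrlicz`, which would have the junk
-- value `0` if the set were unbounded.
theorem luxNorm_add_le {S T : E →L[ℂ] E} (hS : MemS φ S) (hT : MemS φ T) :
    luxNorm φ (S + T) ≤ 2 * (luxNorm φ S + luxNorm φ T) := by
  suffices h : luxNorm φ (S + T) / 2 - luxNorm φ T ≤ luxNorm φ S by linarith
  refine le_csInf hS.luxSet_nonempty fun r hr => ?_
  suffices h : luxNorm φ (S + T) / 2 - r ≤ luxNorm φ T by linarith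
  refine le_csInf hT.luxSet_nonempty fun s hs => ?_
  linarith [luxNorm_le_of_mem (two_mul_add_mem_luxSet hr hs)]

theorem le_JOrlicz {T B : E →L[ℂ] E} {c : ℝ} (hT : MemS φ T) (hB : MemS φ B)
    (hT1 : luxNorm φ T = 1) (hB1 : luxNorm φ B = 1) (hadd : c ≤ luxNorm φ (T + B))
    (hsub : c ≤ luxNorm φ (T - B)) : c ≤ JOrlicz (H := E) φ := by
  refine (le_min hadd hsub).trans (le_csSup ⟨4, ?_⟩ ⟨T, B, hT, hB, hT1, hB1, rfl⟩)
  rintro _ ⟨S, R, hS, hR, hS1, hR1, rfl⟩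
  calc min (luxNorm φ (S + R)) (luxNorm φ (S - R)) ≤ luxNorm φ (S + R) := min_le_left _ _
    _ ≤ 2 * (luxNorm φ S + luxNorm φ R) := luxNorm_add_le hS hR
    _ = 4 := by rw [hS1, hR1]; norm_num

theorem luxNorm_eq_div_of_sValue_eq_ite {g : ℝ → ℝ} (hg : IsOrliczInverse g φ.toFun)
    {T : E →L[ℂ] E} {n : ℕ} (hn : 0 < n) {a : ℝ} (ha : 0 < a)
    (hT : ∀ k, sValue T k = if k < n then a else 0) : luxNorm φ T = a / g (1 / n) := by
  have hn' : (0 : ℝ) < n := by exact_mod_cast hn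
  have hgn : 0 < g (1 / n) := hg.pos (one_div_pos.2 hn')
  have hsum : ∀ l : ℝ, HasSum (fun k => φ.toFun (sValue T k / l)) (n * φ.toFun (a / l)) := by
    intro l
    have h : HasSum (fun k => φ.toFun (sValue T k / l))
        (∑ k ∈ Finset.range n, φ.toFun (sValue T k / l)) :=
      hasSum_sum_of_ne_finset_zero fun k hk => by
        rw [hT, if_neg (by simpa using hk), zero_div, φ.map_zero]
    rwa [Finset.sum_congr rfl fun k hk => by rw [hT, if_pos (Finset.mem_range.1 hk)],
      Finset.sum_const, Finset.card_range, nsmul_eq_mul] at h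
  have hset : luxSet φ T = Set.Ici (a / g (1 / n)) := by
    ext l
    have hiff : 0 < l → (n * φ.toFun (a / l) ≤ 1 ↔ a / g (1 / n) ≤ l) := fun hl => by
      rw [← le_div_iff₀' hn', hg.map_le_iff_le (by positivity) (by positivity), div_le_iff₀ hl,
        div_le_iff₀' hgn]
    rw [luxSet, Set.mem_ofPred_eq, (hsum l).tsum_eq, and_iff_right (hsum l).summable, Set.mem_Ici]
    refine ⟨fun h => (hiff h.1).1 h.2, fun h => ?_⟩
    have hl := (div_pos ha hgn).trans_le h
    exact ⟨hl, (hiff hl).2 h⟩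
  rw [luxNorm_eq_sInf_luxSet, hset, csInf_Ici]

end LuxemburgNorm

theorem exists_orthonormal_nat_of_not_finiteDimensional {𝕜 E : Type*} [RCLike 𝕜]
    [NormedAddCommGroup E] [InnerProductSpace 𝕜 E] (hE : ¬ FiniteDimensional 𝕜 E) :
    ∃ v : ℕ → E, Orthonormal 𝕜 v := by
  let b := Module.Basis.ofVectorSpace 𝕜 E
  have : Infinite (Module.Basis.ofVectorSpaceIndex 𝕜 E) :=
    not_finite_iff_infinite.1 fun _ => hE (Module.Finite.of_basis b)
  exact ⟨_, InnerProductSpace.gramSchmidtNormed_orthonormal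
    (b.linearIndependent.comp _ (Infinite.natEmbedding _).injective)⟩

section DiagonalOperators

variable {𝕜 ι E : Type*} [RCLike 𝕜] [NormedAddCommGroup E] [InnerProductSpace 𝕜 E] {v : ι → E}

theorem norm_sq_sum_smul_of_orthonormal (hv : Orthonormal 𝕜 v) (s : Finset ι) (z : ι → 𝕜) :
    ‖∑ i ∈ s, z i • v i‖ ^ 2 = ∑ i ∈ s, ‖z i‖ ^ 2 := by
  have h := hv.inner_sum z z s
  simp only [inner_self_eq_norm_sq_to_K, RCLike.conj_mul] at h
  exact_mod_cast h

theorem sum_norm_sq_inner_of_mem_span (hv : Orthonormal 𝕜 v) {s : Finset ι} {x : E}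
    (hx : x ∈ Submodule.span 𝕜 (v '' s)) : ∑ i ∈ s, ‖inner 𝕜 (v i) x‖ ^ 2 = ‖x‖ ^ 2 := by
  obtain ⟨z, hz, rfl⟩ := (Finsupp.mem_span_image_iff_linearCombination 𝕜).1 hx
  simp only [hv.inner_right_finsupp]
  rw [Finsupp.linearCombination_apply_of_mem_supported 𝕜 hz, norm_sq_sum_smul_of_orthonormal hv]

/-- The finite-rank diagonal operator `x ↦ ∑ i, c i ⟪v i, x⟫ v i` along a family `v`, as a linear
function of its finitely supported coefficients `c`. -/
noncomputable def diagOp (v : ι → E) : (ι →₀ 𝕜) →ₗ[𝕜] E →L[𝕜] E :=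
  Finsupp.linearCombination 𝕜 fun i => InnerProductSpace.rankOne 𝕜 (v i) (v i)

theorem diagOp_apply (v : ι → E) (c : ι →₀ 𝕜) (x : E) :
    diagOp v c x = ∑ i ∈ c.support, (c i * inner 𝕜 (v i) x) • v i := by
  simp [diagOp, Finsupp.linearCombination_apply, Finsupp.sum, smul_smul]

theorem norm_sq_diagOp_apply (hv : Orthonormal 𝕜 v) (c : ι →₀ 𝕜) (x : E) :
    ‖diagOp v c x‖ ^ 2 = ∑ i ∈ c.support, (‖c i‖ * ‖inner 𝕜 (v i) x‖) ^ 2 := by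
  simp only [diagOp_apply, norm_sq_sum_smul_of_orthonormal hv, norm_mul]

theorem norm_diagOp_le (hv : Orthonormal 𝕜 v) {c : ι →₀ 𝕜} {a : ℝ} (ha : 0 ≤ a)
    (hc : ∀ i ∈ c.support, ‖c i‖ ≤ a) : ‖diagOp v c‖ ≤ a := by
  refine ContinuousLinearMap.opNorm_le_bound _ ha fun x => le_of_sq_le_sq ?_ (by positivity)
  calc ‖diagOp v c x‖ ^ 2 = ∑ i ∈ c.support, (‖c i‖ * ‖inner 𝕜 (v i) x‖) ^ 2 :=
        norm_sq_diagOp_apply hv c x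
    _ ≤ ∑ i ∈ c.support, (a * ‖inner 𝕜 (v i) x‖) ^ 2 :=
        Finset.sum_le_sum fun i hi => by gcongr; exact hc i hi
    _ = a ^ 2 * ∑ i ∈ c.support, ‖inner 𝕜 (v i) x‖ ^ 2 := by simp only [mul_pow, Finset.mul_sum]
    _ ≤ a ^ 2 * ‖x‖ ^ 2 := by gcongr; exact hv.sum_inner_products_le x
    _ = (a * ‖x‖) ^ 2 := (mul_pow _ _ _).symm

theorem mul_norm_le_norm_diagOp_apply (hv : Orthonormal 𝕜 v) {c : ι →₀ 𝕜} {a : ℝ} (ha : 0 ≤ a)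
    (hc : ∀ i ∈ c.support, a ≤ ‖c i‖) {x : E} (hx : x ∈ Submodule.span 𝕜 (v '' c.support)) :
    a * ‖x‖ ≤ ‖diagOp v c x‖ := by
  refine le_of_sq_le_sq ?_ (norm_nonneg _)
  calc (a * ‖x‖) ^ 2 = ∑ i ∈ c.support, (a * ‖inner 𝕜 (v i) x‖) ^ 2 := by
        simp only [mul_pow, ← Finset.mul_sum, sum_norm_sq_inner_of_mem_span hv hx]
    _ ≤ ∑ i ∈ c.support, (‖c i‖ * ‖inner 𝕜 (v i) x‖) ^ 2 :=
        Finset.sum_le_sum fun i hi => by gcongr; exact hc i hi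
    _ = ‖diagOp v c x‖ ^ 2 := (norm_sq_diagOp_apply hv c x).symm

theorem rank_range_diagOp_le (v : ι → E) (c : ι →₀ 𝕜) :
    Module.rank 𝕜 (LinearMap.range (diagOp v c).toLinearMap) ≤ c.support.card := by
  classical
  have h : LinearMap.range (diagOp v c).toLinearMap ≤
      Submodule.span 𝕜 (c.support.image v : Set E) := by
    rintro _ ⟨x, rfl⟩
    rw [ContinuousLinearMap.coe_coe, diagOp_apply]
    exact Submodule.sum_mem _ fun i hi => Submodule.smul_mem _ _
      (Submodule.subset_span (Finset.mem_coe.2 (Finset.mem_image_of_mem v hi)))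
  refine (Submodule.rank_mono h).trans ((rank_span_finset_le _).trans ?_)
  exact_mod_cast Finset.card_image_le

end DiagonalOperators

/-- `IsFlat c a n` says that `c` has exactly `n` nonzero coefficients, all of modulus `a`.  Diagonal
operators with such coefficients are the extremal ones for the nonsquare constant. -/
structure IsFlat {𝕜 ι : Type*} [RCLike 𝕜] (c : ι →₀ 𝕜) (a : ℝ) (n : ℕ) : Prop where
  card_support : c.support.card = n
  norm_apply : ∀ i ∈ c.support, ‖c i‖ = a

namespace IsFlat

section Coefficients

variable {𝕜 ι : Type*} [RCLike 𝕜] {c d : ι →₀ 𝕜} {a : ℝ} {m n : ℕ}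

theorem indicator (s : Finset ι) (ha : 0 < a) :
    IsFlat (Finsupp.indicator s fun _ _ => (a : 𝕜)) a s.card := by
  classical
  have hs : (Finsupp.indicator s fun _ _ => (a : 𝕜)).support = s := by
    ext i
    simp [Finsupp.indicator_apply, ha.ne']
  refine ⟨by rw [hs], fun i hi => ?_⟩
  rw [Finsupp.indicator_of_mem (hs ▸ hi), RCLike.norm_ofReal, abs_of_pos ha]

theorem neg (hc : IsFlat c a n) : IsFlat (-c) a n :=
  ⟨by rw [Finsupp.support_neg, hc.card_support], fun i hi => by
    rw [Finsupp.neg_apply, norm_neg, hc.norm_apply i (by rwa [Finsupp.support_neg] at hi)]⟩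

theorem smul (hc : IsFlat c a n) {b : 𝕜} (hb : b ≠ 0) : IsFlat (b • c) (‖b‖ * a) n := by
  have hs : (b • c).support = c.support := Finsupp.support_smul_eq hb
  exact ⟨hs ▸ hc.card_support, fun i hi => by
    rw [Finsupp.smul_apply, norm_smul, hc.norm_apply i (hs ▸ hi)]⟩

theorem add (hc : IsFlat c a m) (hd : IsFlat d a n) (hcd : Disjoint c.support d.support) :
    IsFlat (c + d) a (m + n) := by
  classical
  have hs := Finsupp.support_add_eq hcd
  refine ⟨by rw [hs, Finset.card_union_of_disjoint hcd, hc.card_support, hd.card_support], ?_⟩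
  intro i hi
  rw [Finsupp.add_apply]
  rcases Finset.mem_union.1 (hs ▸ hi) with hi | hi
  · rw [Finsupp.notMem_support_iff.1 (Finset.disjoint_left.1 hcd hi), add_zero,
      hc.norm_apply i hi]
  · rw [Finsupp.notMem_support_iff.1 (Finset.disjoint_right.1 hcd hi), zero_add,
      hd.norm_apply i hi]

theorem sub (hc : IsFlat c a m) (hd : IsFlat d a n) (hcd : Disjoint c.support d.support) :
    IsFlat (c - d) a (m + n) := by
  rw [sub_eq_add_neg]
  exact hc.add hd.neg (by rwa [Finsupp.support_neg])

theorem exists_disjoint (𝕜 ι : Type*) [RCLike 𝕜] [Infinite ι] (ha : 0 < a) (n : ℕ) :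
    ∃ c d : ι →₀ 𝕜, IsFlat c a n ∧ IsFlat d a n ∧ Disjoint c.support d.support := by
  classical
  obtain ⟨s, hs⟩ := Infinite.exists_subset_card_eq ι n
  obtain ⟨t, hst, ht⟩ := Infinite.exists_superset_card_eq s (n + n) (by omega)
  have hts : (t \ s).card = n := by rw [Finset.card_sdiff_of_subset hst]; omega
  exact ⟨_, _, hs ▸ indicator s ha, hts ▸ indicator (t \ s) ha,
    Finset.disjoint_sdiff.mono (Finsupp.support_indicator_subset _ _)
      (Finsupp.support_indicator_subset _ _)⟩

end Coefficients

section Luxemburg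

variable {ι E : Type} [NormedAddCommGroup E] [InnerProductSpace ℂ E] {v : ι → E} {c : ι →₀ ℂ}
  {a : ℝ} {n : ℕ}

theorem sValue_diagOp (hc : IsFlat c a n) (ha : 0 ≤ a) (hv : Orthonormal ℂ v) (k : ℕ) :
    sValue (diagOp v c) k = if k < n then a else 0 := by
  split_ifs with hk
  · have hfin : Module.finrank ℂ (Submodule.span ℂ (v '' c.support)) = n := by
      rw [← hc.card_support, Set.image_eq_range, ← Fintype.card_coe c.support]
      exact finrank_span_eq_card (hv.comp _ Subtype.val_injective).linearIndependent
    exact le_antisymm ((sValue_le_norm _ k).trans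
      (norm_diagOp_le hv ha fun i hi => (hc.norm_apply i hi).le))
      (le_sValue_of_lt_finrank (hfin ▸ hk) fun x hx =>
        mul_norm_le_norm_diagOp_apply hv ha (fun i hi => (hc.norm_apply i hi).ge) hx)
  · refine sValue_eq_zero_of_rank_le ((rank_range_diagOp_le v c).trans ?_)
    rw [hc.card_support]
    exact_mod_cast not_lt.1 hk

theorem luxNorm_diagOp (hc : IsFlat c a n) (ha : 0 < a) (hn : 0 < n) (hv : Orthonormal ℂ v)
    {φ : OrliczFunction} {g : ℝ → ℝ} (hg : IsOrliczInverse g φ.toFun) :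
    luxNorm φ (diagOp v c) = a / g (1 / n) :=
  luxNorm_eq_div_of_sValue_eq_ite hg hn ha (hc.sValue_diagOp ha.le hv)

end Luxemburg

end IsFlat

section NonsquareConstant

variable {ι E : Type} [Infinite ι] [NormedAddCommGroup E] [InnerProductSpace ℂ E] {v : ι → E}
  {φ : OrliczFunction} {g : ℝ → ℝ} {n : ℕ}

theorem div_le_JOrlicz (hg : IsOrliczInverse g φ.toFun) (hv : Orthonormal ℂ v) (hn : 0 < n) :
    g (1 / n) / g (1 / (2 * n)) ≤ JOrlicz (H := E) φ := by
  have ha : 0 < g (1 / n) := hg.pos (by positivity)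
  obtain ⟨p, q, hp, hq, hpq⟩ := IsFlat.exists_disjoint ℂ ι ha n
  have h2n : 0 < n + n := by omega
  have hcast : ((n + n : ℕ) : ℝ) = 2 * n := by push_cast; ring
  refine le_JOrlicz (T := diagOp v p) (B := diagOp v q)
    (memS_of_rank_le φ (rank_range_diagOp_le v p)) (memS_of_rank_le φ (rank_range_diagOp_le v q))
    ?_ ?_ ?_ ?_
  · rw [hp.luxNorm_diagOp ha hn hv hg, div_self ha.ne']
  · rw [hq.luxNorm_diagOp ha hn hv hg, div_self ha.ne']
  · rw [← map_add, (hp.add hq hpq).luxNorm_diagOp ha h2n hv hg, hcast]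
  · rw [← map_sub, (hp.sub hq hpq).luxNorm_diagOp ha h2n hv hg, hcast]

theorem two_mul_div_le_JOrlicz (hg : IsOrliczInverse g φ.toFun) (hv : Orthonormal ℂ v)
    (hn : 0 < n) : 2 * g (1 / (2 * n)) / g (1 / n) ≤ JOrlicz (H := E) φ := by
  have ha : 0 < g (1 / (2 * n)) := hg.pos (by positivity)
  have h2a : 0 < ‖(2 : ℂ)‖ * g (1 / (2 * n)) := mul_pos (norm_pos_iff.2 two_ne_zero) ha
  obtain ⟨p, q, hp, hq, hpq⟩ := IsFlat.exists_disjoint ℂ ι ha n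
  have h2n : 0 < n + n := by omega
  have hcast : ((n + n : ℕ) : ℝ) = 2 * n := by push_cast; ring
  have hadd : p + q + (p - q) = (2 : ℂ) • p := by rw [two_smul]; abel
  have hsub : p + q - (p - q) = (2 : ℂ) • q := by rw [two_smul]; abel
  refine le_JOrlicz (T := diagOp v (p + q)) (B := diagOp v (p - q))
    (memS_of_rank_le φ (rank_range_diagOp_le v _)) (memS_of_rank_le φ (rank_range_diagOp_le v _))
    ?_ ?_ ?_ ?_
  · rw [(hp.add hq hpq).luxNorm_diagOp ha h2n hv hg, hcast, div_self ha.ne']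
  · rw [(hp.sub hq hpq).luxNorm_diagOp ha h2n hv hg, hcast, div_self ha.ne']
  · rw [← map_add, hadd, (hp.smul two_ne_zero).luxNorm_diagOp h2a hn hv hg, RCLike.norm_two]
  · rw [← map_sub, hsub, (hq.smul two_ne_zero).luxNorm_diagOp h2a hn hv hg, RCLike.norm_two]

end NonsquareConstant

theorem stmt14_general {E : Type} [NormedAddCommGroup E] [InnerProductSpace ℂ E]
    (hE : ¬ FiniteDimensional ℂ E) (φ : OrliczFunction) (g : ℝ → ℝ)
    (hg : IsOrliczInverse g φ.toFun) :
    max (liminf (fun u : ℝ => g u / g (2 * u)) (𝓝[>] (0 : ℝ)))⁻¹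
        (2 * limsup (fun u : ℝ => g u / g (2 * u)) (𝓝[>] (0 : ℝ))) ≤ JOrlicz (H := E) φ := by
  obtain ⟨v, hv⟩ := exists_orthonormal_nat_of_not_finiteDimensional hE
  have hpos : ∀ n : ℕ, 0 < n → 0 < g (1 / n) ∧ 0 < g (1 / (2 * n)) := fun n hn =>
    ⟨hg.pos (by positivity), hg.pos (by positivity)⟩
  have hJ : 0 < JOrlicz (H := E) φ :=
    (div_pos (hpos 1 one_pos).1 (hpos 1 one_pos).2).trans_le (div_le_JOrlicz hg hv one_pos)
  refine max_le (inv_le_of_inv_le₀ hJ (hg.le_liminf_ratio fun n hn => ?_)) ?_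
  · rw [inv_le_comm₀ hJ (div_pos (hpos n hn).2 (hpos n hn).1), inv_div]
    exact div_le_JOrlicz hg hv hn
  · rw [← le_div_iff₀' two_pos]
    refine hg.limsup_ratio_le fun n hn => ?_
    rw [le_div_iff₀' two_pos, ← mul_div_assoc]
    exact two_mul_div_le_JOrlicz hg hv hn

/-- if the N-function `φ` satisfies the `δ₂` condition near zero, then the
nonsquare constant of `S_φ(H)` (with the Luxemburg norm) satisfies
`J(S_φ) ≥ max {α_φ⁻¹, 2 β_φ}`, where `α_φ = liminf_{u→0⁺} φ⁻¹(u)/φ⁻¹(2u)` and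
`β_φ = limsup_{u→0⁺} φ⁻¹(u)/φ⁻¹(2u)`.  (Here `H` is an infinite-dimensional separable
complex Hilbert space, witnessed by the Hilbert basis `e` indexed by `ℕ`.) -/
theorem stmt14 {H : Type} [NormedAddCommGroup H] [InnerProductSpace ℂ H]
    [CompleteSpace H] [TopologicalSpace.SeparableSpace H]
    (e : HilbertBasis ℕ ℂ H)
    (φ : OrliczFunction)
    (hδ : ∃ u₀ : ℝ, 0 < u₀ ∧ ∃ k : ℝ, 2 < k ∧
      ∀ u : ℝ, 0 ≤ u → u ≤ u₀ → φ.toFun (2 * u) ≤ k * φ.toFun u)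
    (g : ℝ → ℝ) (hg : IsOrliczInverse g φ.toFun) :
    max (Filter.liminf (fun u : ℝ => g u / g (2 * u)) (𝓝[>] (0 : ℝ)))⁻¹
        (2 * Filter.limsup (fun u : ℝ => g u / g (2 * u)) (𝓝[>] (0 : ℝ))) ≤
      JOrlicz (H := H) φ := by
  exact stmt14_general (fun _ => Module.Finite.not_linearIndependent_of_infinite e
    e.orthonormal.linearIndependent) φ g hg
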